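/- arXiv:1411.2455 — 2 statements merged into one kernel-verified Lean document; each statement's English description precedes it below -/
import Mathlib

section
/- For natural number n and complex a, b, c, d (with 1−b, 1−c, 1−d, 1+a−c avoiding nonpositive-integer degeneracies making denominators vanish): ∑_{k=0}^{n} (−n)_k (a)_k (b−n)_k / ((c−n)_k (d−n)_k k!) = ((1+a−c)_n (1−b)_n / ((1−c)_n (1−d)_n)) · ∑_{k=0}^{n} (−n)_k (d−b)_k (1−c)_k / ((1+a−c)_k (1−b)_k k!). -/
open Complex Finset

/-- Pochhammer symbol `(x)_k = x (x+1) ⋯ (x+k-1)`. -/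
noncomputable def poch (x : ℂ) (k : ℕ) : ℂ := ∏ i ∈ Finset.range k, (x + i)

/-- Beta function `B(x,y) = Γ(x) Γ(y) / Γ(x+y)`. -/
noncomputable def cBeta (x y : ℂ) : ℂ :=
  Complex.Gamma x * Complex.Gamma y / Complex.Gamma (x + y)

/-! With `B = 1 - b`, `C = 1 - c`, `D = 1 - d`, reversing the Pochhammer symbols whose arguments are
shifted by `-n` turns the left-hand series into a multiple of
`∑ (n choose k) (a)_k (C)_{n-k} (D)_{n-k} / (B)_{n-k}`. By Chu–Vandermonde the ratio
`(D)_m / (B)_m` is a combination of binomial coefficients `m choose j`, with coefficients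
`(-1)^j (B - D)_j / (B)_j`. Exchanging the two sums leaves an inner sum over `k` which is again
Chu–Vandermonde, with value `(a + C)_n / (a + C)_j`. -/

/-- The Pochhammer symbol `(x)_k = x (x + 1) ⋯ (x + k - 1)` over an arbitrary ring. -/
local notation:max x:max "⁽" k "⁾" => Polynomial.eval x (ascPochhammer _ k)

section Antidiagonal

variable {A M : Type*} [AddCommMonoid A] [HasAntidiagonal A] [AddCommMonoid M]

theorem sum_antidiagonal_left_comm (f : A → A → A → M) (n : A) :
    ∑ p ∈ antidiagonal n, ∑ q ∈ antidiagonal p.2, f p.1 q.1 q.2 =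
      ∑ p ∈ antidiagonal n, ∑ q ∈ antidiagonal p.2, f q.1 p.1 q.2 := by
  simp only [Finset.sum_sigma']
  refine Finset.sum_nbij' (fun ⟨⟨k, _⟩, ⟨j, i⟩⟩ ↦ ⟨(j, k + i), (k, i)⟩)
    (fun ⟨⟨j, _⟩, ⟨k, i⟩⟩ ↦ ⟨(k, j + i), (j, i)⟩) ?_ ?_ ?_ ?_ ?_ <;>
  · rintro ⟨⟨x, _⟩, ⟨y, z⟩⟩ h
    simp only [mem_sigma, HasAntidiagonal.mem_antidiagonal] at h
    obtain ⟨rfl, rfl⟩ := h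
    simp [add_left_comm]

end Antidiagonal

theorem choose_mul_choose_left_comm (k j i : ℕ) :
    (k + (j + i)).choose k * (j + i).choose j = (j + (k + i)).choose j * (k + i).choose k := by
  have h := Nat.choose_mul (n := k + (j + i)) (Nat.le_add_right j i)
  rw [← Nat.choose_symm_add, add_left_comm k j i, Nat.add_sub_cancel_left,
    Nat.add_sub_cancel_left] at h
  rw [add_left_comm k j i, h, ← Nat.choose_symm_add]

theorem ascPochhammer_eval_add_right {R : Type*} [CommSemiring R] (x : R) (j k : ℕ) :
    x⁽j + k⁾ = x⁽j⁾ * (x + j)⁽k⁾ := by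
  simp [← ascPochhammer_mul]

section CommRing

variable {R : Type*} [CommRing R]

theorem ascPochhammer_eval_reflect (x : R) (k : ℕ) : x⁽k⁾ = (-1) ^ k * (1 - x - k)⁽k⁾ := by
  rw [← neg_neg x, ascPochhammer_eval_neg_eq_descPochhammer, descPochhammer_eval_eq_ascPochhammer]
  ring_nf

theorem ascPochhammer_eval_neg_natCast (n k : ℕ) :
    (-(n : R))⁽k⁾ = (-1) ^ k * (n.choose k * k.factorial) := by
  rw [ascPochhammer_eval_neg_eq_descPochhammer, descPochhammer_eval_eq_descFactorial,
    Nat.descFactorial_eq_factorial_mul_choose, Nat.cast_mul, mul_comm (k.factorial : R)]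

theorem ascPochhammer_eval_sub_natCast_mul (x : R) {k n : ℕ} (hkn : k ≤ n) :
    (x - n)⁽k⁾ * (1 - x)⁽n - k⁾ = (-1) ^ k * (1 - x)⁽n⁾ := by
  obtain ⟨m, rfl⟩ := Nat.exists_eq_add_of_le' hkn
  have h : 1 - (x - (m + k : ℕ)) - k = 1 - x + m := by push_cast; ring
  rw [ascPochhammer_eval_reflect, h, Nat.add_sub_cancel, ascPochhammer_eval_add_right]
  ring

theorem ascPochhammer_eval_add_left (x y : R) (n : ℕ) :
    (x + y)⁽n⁾ = ∑ p ∈ antidiagonal n, n.choose p.1 * (x⁽p.1⁾ * y⁽p.2⁾) := by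
  have hneg (r : R) (k : ℕ) : r⁽k⁾ = Int.negOnePow k • (descPochhammer ℤ k).smeval (-r) := by
    rw [← Polynomial.ascPochhammer_smeval_neg_eq_descPochhammer,
      Polynomial.ascPochhammer_smeval_eq_eval, neg_neg]
  rw [hneg, neg_add, Ring.descPochhammer_smeval_add n (Commute.all _ _), smul_sum]
  refine sum_congr rfl fun p hp ↦ ?_
  rw [hneg x, hneg y, smul_mul_smul_comm, ← Int.negOnePow_add, ← Nat.cast_add,
    mem_antidiagonal.1 hp, mul_smul_comm]

theorem sum_choose_mul_ascPochhammer_mul_sum_choose (a c : R) (u : ℕ → R) (n : ℕ) :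
    ∑ p ∈ antidiagonal n, n.choose p.1 * (a⁽p.1⁾ * c⁽p.2⁾) *
        ∑ q ∈ antidiagonal p.2, p.2.choose q.1 * u q.1 =
      ∑ p ∈ antidiagonal n, n.choose p.1 * u p.1 * (c⁽p.1⁾ * (a + c + p.1)⁽p.2⁾) := by
  calc
    _ = ∑ p ∈ antidiagonal n, ∑ q ∈ antidiagonal p.2,
          ((p.1 + (q.1 + q.2)).choose p.1 * (q.1 + q.2).choose q.1 : ℕ) *
            (u q.1 * (a⁽p.1⁾ * c⁽q.1 + q.2⁾)) := by
      refine sum_congr rfl fun p hp ↦ ?_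
      rw [mul_sum]
      refine sum_congr rfl fun q hq ↦ ?_
      rw [mem_antidiagonal.1 hq, mem_antidiagonal.1 hp]
      push_cast
      ring
    _ = ∑ p ∈ antidiagonal n, ∑ q ∈ antidiagonal p.2,
          ((p.1 + (q.1 + q.2)).choose p.1 * (q.1 + q.2).choose q.1 : ℕ) *
            (u p.1 * (a⁽q.1⁾ * c⁽p.1 + q.2⁾)) := by
      rw [sum_antidiagonal_left_comm fun k j i ↦
        (((k + (j + i)).choose k * (j + i).choose j : ℕ) : R) * (u j * (a⁽k⁾ * c⁽j + i⁾))]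
      simp only [choose_mul_choose_left_comm]
    _ = _ := by
      refine sum_congr rfl fun p hp ↦ ?_
      rw [add_assoc, ascPochhammer_eval_add_left, mul_sum, mul_sum]
      refine sum_congr rfl fun q hq ↦ ?_
      rw [mem_antidiagonal.1 hq, mem_antidiagonal.1 hp, ascPochhammer_eval_add_right]
      push_cast
      ring

end CommRing

section Field

variable {K : Type*} [Field K]

theorem ascPochhammer_eval_ne_zero {x : K} (hx : ∀ k : ℕ, x ≠ -(k : K)) (n : ℕ) : x⁽n⁾ ≠ 0 := by
  intro h
  obtain ⟨k, -, hk⟩ := (ascPochhammer_eval_eq_zero_iff n x).1 h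
  exact hx k (neg_eq_iff_eq_neg.1 hk.symm)

theorem ascPochhammer_eval_ne_zero_of_le {x : K} {k n : ℕ} (hkn : k ≤ n) (hx : x⁽n⁾ ≠ 0) :
    x⁽k⁾ ≠ 0 := by
  obtain ⟨m, rfl⟩ := Nat.exists_eq_add_of_le hkn
  rw [ascPochhammer_eval_add_right] at hx
  exact left_ne_zero_of_mul hx

theorem ascPochhammer_eval_div_eq_sum {b : K} (d : K) {n : ℕ} (hb : b⁽n⁾ ≠ 0) :
    d⁽n⁾ / b⁽n⁾ =
      ∑ p ∈ antidiagonal n, n.choose p.1 * ((-1) ^ p.1 * (b - d)⁽p.1⁾ / b⁽p.1⁾) := by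
  have hd : 1 - d - n = (b - d) + (1 - b - n) := by ring
  rw [div_eq_iff hb, ascPochhammer_eval_reflect d, hd, ascPochhammer_eval_add_left, mul_sum,
    sum_mul]
  refine sum_congr rfl fun ⟨j, l⟩ hp ↦ ?_
  obtain rfl : j + l = n := mem_antidiagonal.1 hp
  have hbj : b⁽j⁾ ≠ 0 := ascPochhammer_eval_ne_zero_of_le (Nat.le_add_right j l) hb
  have hbl : (b + j)⁽l⁾ = (-1) ^ l * (1 - b - (j + l : ℕ))⁽l⁾ := by
    rw [ascPochhammer_eval_reflect]
    push_cast
    ring_nf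
  rw [ascPochhammer_eval_add_right b, hbl, pow_add]
  field_simp

theorem sum_choose_mul_ascPochhammer_div (a c d : K) {b : K} {n : ℕ}
    (hb : b⁽n⁾ ≠ 0) (hac : (a + c)⁽n⁾ ≠ 0) :
    ∑ p ∈ antidiagonal n, n.choose p.1 * (a⁽p.1⁾ * c⁽p.2⁾) * (d⁽p.2⁾ / b⁽p.2⁾) =
      (a + c)⁽n⁾ * ∑ p ∈ antidiagonal n,
        n.choose p.1 * ((-1) ^ p.1 * (b - d)⁽p.1⁾ / b⁽p.1⁾) * (c⁽p.1⁾ / (a + c)⁽p.1⁾) := by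
  have hratio : ∀ p ∈ antidiagonal n, d⁽p.2⁾ / b⁽p.2⁾ =
      ∑ q ∈ antidiagonal p.2, p.2.choose q.1 * ((-1) ^ q.1 * (b - d)⁽q.1⁾ / b⁽q.1⁾) :=
    fun p hp ↦ ascPochhammer_eval_div_eq_sum d
      (ascPochhammer_eval_ne_zero_of_le (HasAntidiagonal.antidiagonal.snd_le hp) hb)
  rw [sum_congr rfl fun p hp ↦ congrArg _ (hratio p hp),
    sum_choose_mul_ascPochhammer_mul_sum_choose a c fun j ↦ (-1) ^ j * (b - d)⁽j⁾ / b⁽j⁾, mul_sum]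
  refine sum_congr rfl fun ⟨j, l⟩ hp ↦ ?_
  obtain rfl : j + l = n := mem_antidiagonal.1 hp
  have hj : (a + c)⁽j⁾ ≠ 0 := ascPochhammer_eval_ne_zero_of_le (Nat.le_add_right j l) hac
  rw [ascPochhammer_eval_add_right (a + c)]
  field_simp

variable [CharZero K]

theorem ascPochhammer_eval_neg_natCast_div (n k : ℕ) :
    (-(n : K))⁽k⁾ / k.factorial = (-1) ^ k * n.choose k := by
  rw [ascPochhammer_eval_neg_natCast, ← mul_assoc,
    mul_div_cancel_right₀ _ (Nat.cast_ne_zero.2 k.factorial_ne_zero)]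

theorem ascPochhammer_quotient_reverse (a : K) {b c d : K} {k n : ℕ} (hkn : k ≤ n)
    (hb : (1 - b)⁽n⁾ ≠ 0) (hc : (1 - c)⁽n⁾ ≠ 0) (hd : (1 - d)⁽n⁾ ≠ 0) :
    (-(n : K))⁽k⁾ * a⁽k⁾ * (b - n)⁽k⁾ / ((c - n)⁽k⁾ * (d - n)⁽k⁾ * k.factorial) =
      (1 - b)⁽n⁾ / ((1 - c)⁽n⁾ * (1 - d)⁽n⁾) *
        (n.choose k * (a⁽k⁾ * (1 - c)⁽n - k⁾) * ((1 - d)⁽n - k⁾ / (1 - b)⁽n - k⁾)) := by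
  have hsub {x : K} (hx : (1 - x)⁽n⁾ ≠ 0) : (1 - x)⁽n - k⁾ ≠ 0 :=
    ascPochhammer_eval_ne_zero_of_le (Nat.sub_le n k) hx
  have hreverse {x : K} (hx : (1 - x)⁽n⁾ ≠ 0) :
      (x - n)⁽k⁾ = (-1) ^ k * (1 - x)⁽n⁾ / (1 - x)⁽n - k⁾ :=
    eq_div_of_mul_eq (hsub hx) (ascPochhammer_eval_sub_natCast_mul x hkn)
  have hbk := hsub hb
  have hck := hsub hc
  have hdk := hsub hd
  have hk : (k.factorial : K) ≠ 0 := Nat.cast_ne_zero.2 k.factorial_ne_zero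
  rw [hreverse hb, hreverse hc, hreverse hd, mul_assoc, ascPochhammer_eval_neg_natCast]
  field_simp

theorem terminating_transform_86_general (n : ℕ) (a b c d : K) (hb : (1 - b)⁽n⁾ ≠ 0)
    (hc : (1 - c)⁽n⁾ ≠ 0) (hd : (1 - d)⁽n⁾ ≠ 0) (hac : (1 + a - c)⁽n⁾ ≠ 0) :
    ∑ k ∈ range (n + 1), (-(n : K))⁽k⁾ * a⁽k⁾ * (b - n)⁽k⁾ /
        ((c - n)⁽k⁾ * (d - n)⁽k⁾ * k.factorial) =
      (1 + a - c)⁽n⁾ * (1 - b)⁽n⁾ / ((1 - c)⁽n⁾ * (1 - d)⁽n⁾) *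
        ∑ k ∈ range (n + 1), (-(n : K))⁽k⁾ * (d - b)⁽k⁾ * (1 - c)⁽k⁾ /
          ((1 + a - c)⁽k⁾ * (1 - b)⁽k⁾ * k.factorial) := by
  have hac' : a + (1 - c) = 1 + a - c := by ring
  have hbd : 1 - b - (1 - d) = d - b := by ring
  have key := sum_choose_mul_ascPochhammer_div a (1 - c) (1 - d) hb (hac' ▸ hac)
  rw [hac', hbd] at key
  simp only [Nat.sum_antidiagonal_eq_sum_range_succ_mk] at key
  have hleft (k : ℕ) (hk : k ∈ range (n + 1)) :=
    ascPochhammer_quotient_reverse a (mem_range_succ_iff.1 hk) hb hc hd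
  have hright (k : ℕ) : (-(n : K))⁽k⁾ * (d - b)⁽k⁾ * (1 - c)⁽k⁾ /
      ((1 + a - c)⁽k⁾ * (1 - b)⁽k⁾ * k.factorial) =
        n.choose k * ((-1) ^ k * (d - b)⁽k⁾ / (1 - b)⁽k⁾) * ((1 - c)⁽k⁾ / (1 + a - c)⁽k⁾) := by
    linear_combination (ascPochhammer_eval_neg_natCast_div (K := K) n k) *
      ((d - b)⁽k⁾ / (1 - b)⁽k⁾) * ((1 - c)⁽k⁾ / (1 + a - c)⁽k⁾)
  rw [sum_congr rfl hleft, ← mul_sum, key]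
  simp only [hright]
  ring

end Field

theorem poch_eq_ascPochhammer_eval (x : ℂ) (k : ℕ) : poch x k = x⁽k⁾ := by
  induction k with
  | zero => simp [poch]
  | succ k ih => rw [ascPochhammer_succ_eval, ← ih, poch, poch, prod_range_succ]

theorem terminating_transform_86 (n : ℕ) (a b c d : ℂ)
    (h1 : ∀ k : ℕ, 1 - b ≠ -(k : ℂ)) (h2 : ∀ k : ℕ, 1 - c ≠ -(k : ℂ))
    (h3 : ∀ k : ℕ, 1 - d ≠ -(k : ℂ)) (h4 : ∀ k : ℕ, 1 + a - c ≠ -(k : ℂ)) :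
    ∑ k ∈ Finset.range (n + 1),
        poch (-(n : ℂ)) k * poch a k * poch (b - n) k /
          (poch (c - n) k * poch (d - n) k * (Nat.factorial k : ℂ)) =
      (poch (1 + a - c) n * poch (1 - b) n / (poch (1 - c) n * poch (1 - d) n)) *
        ∑ k ∈ Finset.range (n + 1),
          poch (-(n : ℂ)) k * poch (d - b) k * poch (1 - c) k /
            (poch (1 + a - c) k * poch (1 - b) k * (Nat.factorial k : ℂ)) := by
  simp only [poch_eq_ascPochhammer_eval]
  exact terminating_transform_86_general n a b c d (ascPochhammer_eval_ne_zero h1 n)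
    (ascPochhammer_eval_ne_zero h2 n) (ascPochhammer_eval_ne_zero h3 n)
    (ascPochhammer_eval_ne_zero h4 n)
end

section
/- (Main theorem, symmetric form) For natural numbers m, n and complex a, b, c with Re(a) < 2, b and c not nonpositive integers, c − b not an integer, and 1−a, 1+b−a, 1+c−a, 1−a+b, 1−a+c not nonpositive integers: ₃F₂(a, b, c; b+1+m, c+1+n; 1) / ((b)_{m+1} (c)_{n+1}) = B(1−a, b)/((c−b)_{n+1} · m!) · ₃F₂(−m, b, b−c−n; 1+b−a, 1+b−c; 1) + B(1−a, c)/((b−c)_{m+1} · n!) · ₃F₂(−n, c, c−b−m; 1+c−a, 1+c−b; 1), where the two ₃F₂ series on the right are terminating finite sums and the one on the left converges since Re(2−a+m+n) > 0. -/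
open Complex Finset

/-!
Take `t` finite, pairwise distinct `u i` with `i ∈ t`, and a polynomial `q` of degree less than
`#t`. Partial fractions reduce `∑ₖ (a)ₖ / k! * (q(k) / ∏ᵢ (k - u i))` to the series
`∑ₖ (a)ₖ / (k! (s + k)) = B(1 - a, s)`, which for `Re a < 1` and `0 < Re s` is Euler's beta
integral with `(1 - x) ^ (-a)` expanded in powers of `x`, and then follows for every `s` by descent
`s + 1 → s`. Since `(a)ₖ = (a - 1)ₖ (k + a - 1) / (a - 1)`, a factor of the Pochhammer symbol can
be moved into `q`, so each degree that `q` has to spare relaxes the bound on `Re a` by one.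
The summation formula is the case `q = 1` with poles `-b - j` and `-c - i`.
-/

section Pochhammer

lemma add_natCast_ne_zero {s : ℂ} (hs : ∀ k : ℕ, s ≠ -(k : ℂ)) (j : ℕ) : s + j ≠ 0 :=
  fun h => hs j (eq_neg_of_add_eq_zero_left h)

lemma add_natCast_ne_neg_natCast {s : ℂ} (hs : ∀ k : ℕ, s ≠ -(k : ℂ)) (j k : ℕ) :
    s + j ≠ -(k : ℂ) := by
  intro h
  apply hs (k + j)
  push_cast
  linear_combination h

lemma poch_zero (x : ℂ) : poch x 0 = 1 := by simp only [poch, range_zero, prod_empty]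

lemma poch_succ (x : ℂ) (k : ℕ) : poch x (k + 1) = poch x k * (x + k) :=
  prod_range_succ _ _

lemma poch_one (x : ℂ) : poch x 1 = x := by
  simp only [poch, prod_range_one, Nat.cast_zero, add_zero]

lemma poch_add (x : ℂ) (j k : ℕ) : poch x (j + k) = poch x j * poch (x + j) k := by
  simp only [poch, prod_range_add, Nat.cast_add, add_assoc]

lemma poch_succ_left (x : ℂ) (k : ℕ) : poch x (k + 1) = x * poch (x + 1) k := by
  rw [add_comm, poch_add, poch_one, Nat.cast_one]

lemma poch_ne_zero_iff {x : ℂ} {k : ℕ} : poch x k ≠ 0 ↔ ∀ i < k, x + i ≠ 0 := by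
  simp only [poch, prod_ne_zero_iff, mem_range]

lemma poch_ne_zero {x : ℂ} (hx : ∀ k : ℕ, x ≠ -(k : ℂ)) (k : ℕ) : poch x k ≠ 0 :=
  poch_ne_zero_iff.2 fun i _ => add_natCast_ne_zero hx i

lemma poch_eq_eval_ascPochhammer (x : ℂ) (k : ℕ) : poch x k = (ascPochhammer ℂ k).eval x := by
  induction k with
  | zero => simp [poch_zero]
  | succ k ih => rw [ascPochhammer_succ_eval, ← ih, poch_succ]

lemma poch_neg_natCast (n k : ℕ) : poch (-(n : ℂ)) k = (-1) ^ k * n.descFactorial k := by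
  rw [poch_eq_eval_ascPochhammer, ascPochhammer_eval_neg_eq_descPochhammer,
    descPochhammer_eval_eq_descFactorial]

lemma poch_div_factorial_eq_choose (a : ℂ) (k : ℕ) :
    poch a k / (k.factorial : ℂ) = Ring.choose (a + k - 1) k := by
  have hk : (k.factorial : ℂ) ≠ 0 := Nat.cast_ne_zero.2 k.factorial_ne_zero
  rw [← Ring.multichoose_eq, div_eq_iff hk, mul_comm, ← nsmul_eq_mul,
    Ring.factorial_nsmul_multichoose_eq_ascPochhammer, Polynomial.ascPochhammer_smeval_eq_eval,
    poch_eq_eval_ascPochhammer]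

lemma poch_sub_natCast_mul_poch (x : ℂ) (N j : ℕ) :
    poch (x - j) N * poch (1 - x - N) j = poch x N * poch (1 - x) j := by
  induction j with
  | zero => simp [poch_zero]
  | succ j ih =>
    have hshift : poch (x - (j + 1)) N * (x - (j + 1) + N) = (x - (j + 1)) * poch (x - j) N := by
      rw [← poch_succ, poch_succ_left, show x - ((j : ℂ) + 1) + 1 = x - j by ring]
    rw [poch_succ, poch_succ]
    push_cast
    linear_combination (1 - x + j) * ih - poch (1 - x - N) j * hshift

lemma poch_div_poch_add_one_add {x : ℂ} (hx : ∀ k : ℕ, x ≠ -(k : ℂ)) (p k : ℕ) :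
    poch x k / poch (x + 1 + p) k = poch x (p + 1) / poch (x + k) (p + 1) := by
  have hsplit : poch x (p + 1) * poch (x + 1 + p) k = poch x k * poch (x + k) (p + 1) := by
    rw [← poch_add, add_comm k, poch_add x (p + 1)]
    push_cast
    rw [add_right_comm x, add_assoc x]
  have hne : poch (x + 1 + p) k ≠ 0 := by
    refine poch_ne_zero (fun i => ?_) k
    simpa [add_assoc, add_comm (p : ℂ)] using add_natCast_ne_neg_natCast hx (p + 1) i
  rw [div_eq_div_iff hne (poch_ne_zero (add_natCast_ne_neg_natCast hx k) _), hsplit]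

end Pochhammer

section Beta

lemma cBeta_comm (x y : ℂ) : cBeta x y = cBeta y x := by
  rw [cBeta, cBeta, mul_comm, add_comm]

lemma cBeta_eq_betaIntegral {x y : ℂ} (hx : 0 < x.re) (hy : 0 < y.re) :
    cBeta x y = betaIntegral x y :=
  (betaIntegral_eq_Gamma_mul_div x y hx hy).symm

lemma cBeta_add_one_right_mul (x : ℂ) {s : ℂ} (hs : s ≠ 0) :
    cBeta x (s + 1) * (x + s) = cBeta x s * s := by
  rw [cBeta, cBeta, Gamma_add_one s hs]
  rcases eq_or_ne (x + s) 0 with h | h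
  · simp [h]
  · rw [← add_assoc, Gamma_add_one _ h]
    field_simp

lemma cBeta_add_one_left_mul {x : ℂ} (hx : x ≠ 0) (s : ℂ) :
    cBeta (x + 1) s * (x + s) = cBeta x s * x := by
  rw [cBeta_comm, cBeta_comm x, add_comm x s, cBeta_add_one_right_mul s hx]

lemma cBeta_add_natCast_mul_poch (x : ℂ) {s : ℂ} (hs : ∀ k : ℕ, s ≠ -(k : ℂ)) (j : ℕ) :
    cBeta x (s + j) * poch (x + s) j = cBeta x s * poch s j := by
  induction j with
  | zero => simp [poch_zero]
  | succ j ih =>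
    have hstep := cBeta_add_one_right_mul x (add_natCast_ne_zero hs j)
    rw [poch_succ, poch_succ]
    push_cast
    rw [← add_assoc]
    linear_combination poch (x + s) j * hstep + (s + j) * ih

end Beta

section Asymptotics

open Filter Asymptotics Topology

lemma inv_add_natCast_isBigO (s : ℂ) :
    (fun k : ℕ => (s + k)⁻¹) =O[atTop] fun k : ℕ => (k : ℝ)⁻¹ := by
  refine IsBigO.of_bound 2 ?_
  filter_upwards [eventually_gt_atTop 0,
    tendsto_natCast_atTop_atTop.eventually_ge_atTop (2 * ‖s‖)] with k hk hks
  have hlower : (k : ℝ) / 2 ≤ ‖s + k‖ := by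
    have := norm_sub_le (s + k) s
    rw [add_sub_cancel_left, norm_natCast] at this
    linarith
  rw [norm_inv, norm_inv, Real.norm_natCast]
  calc ‖s + k‖⁻¹ ≤ ((k : ℝ) / 2)⁻¹ := inv_anti₀ (half_pos (Nat.cast_pos.2 hk)) hlower
    _ = 2 * (k : ℝ)⁻¹ := by rw [inv_div, div_eq_mul_inv]

lemma natCast_cpow_isBigO (a : ℂ) :
    (fun k : ℕ => (k : ℂ) ^ a) =O[atTop] fun k : ℕ => (k : ℝ) ^ a.re := by
  refine IsBigO.of_bound 1 ?_
  filter_upwards [eventually_gt_atTop 0] with k hk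
  rw [norm_natCast_cpow_of_pos hk, one_mul]
  exact le_abs_self _

lemma poch_div_factorial_eq_inv_GammaSeq {a : ℂ} (ha : ∀ k : ℕ, a ≠ -(k : ℂ)) {k : ℕ}
    (hk : k ≠ 0) :
    poch a k / (k.factorial : ℂ) = (GammaSeq a k)⁻¹ * (k : ℂ) ^ a * (a + k)⁻¹ := by
  have hGamma : GammaSeq a k = (k : ℂ) ^ a * k.factorial / poch a (k + 1) := rfl
  have hkfac : (k.factorial : ℂ) ≠ 0 := Nat.cast_ne_zero.2 k.factorial_ne_zero
  have hpow : (k : ℂ) ^ a ≠ 0 := (cpow_ne_zero_iff_of_exponent_ne_zero (by simpa using ha 0)).2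
    (Nat.cast_ne_zero.2 hk)
  have hak := add_natCast_ne_zero ha k
  rw [hGamma, poch_succ]
  field_simp

lemma poch_div_factorial_isBigO (a : ℂ) :
    (fun k : ℕ => poch a k / (k.factorial : ℂ)) =O[atTop] fun k : ℕ => (k : ℝ) ^ (a.re - 1) := by
  by_cases ha : ∀ k : ℕ, a ≠ -(k : ℂ)
  · have hGamma : (fun k => (GammaSeq a k)⁻¹) =O[atTop] fun _ => (1 : ℝ) :=
      ((GammaSeq_tendsto_Gamma a).inv₀ (Gamma_ne_zero ha)).isBigO_one ℝ
    refine ((hGamma.mul (natCast_cpow_isBigO a)).mul (inv_add_natCast_isBigO a)).congr' ?_ ?_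
    · filter_upwards [eventually_ne_atTop 0] with k hk
      exact (poch_div_factorial_eq_inv_GammaSeq ha hk).symm
    · filter_upwards [eventually_ne_atTop 0] with k hk
      rw [one_mul, Real.rpow_sub_one (Nat.cast_ne_zero.2 hk), div_eq_mul_inv]
  · push Not at ha
    obtain ⟨p, rfl⟩ := ha
    refine (isBigO_zero _ _).congr' ?_ EventuallyEq.rfl
    filter_upwards [eventually_gt_atTop p] with k hk
    rw [poch_neg_natCast, Nat.descFactorial_of_lt hk, Nat.cast_zero, mul_zero, zero_div]

lemma poch_div_factorial_mul_inv_isBigO (a s : ℂ) :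
    (fun k : ℕ => poch a k / (k.factorial : ℂ) * (s + k)⁻¹) =O[atTop]
      fun k : ℕ => (k : ℝ) ^ (a.re - 2) := by
  refine ((poch_div_factorial_isBigO a).mul (inv_add_natCast_isBigO s)).congr' EventuallyEq.rfl ?_
  filter_upwards [eventually_ne_atTop 0] with k hk
  rw [← div_eq_mul_inv, ← Real.rpow_sub_one (Nat.cast_ne_zero.2 hk)]
  ring_nf

lemma summable_norm_poch_div_factorial_mul_inv {a : ℂ} (ha : a.re < 1) (s : ℂ) :
    Summable fun k : ℕ => ‖poch a k / (k.factorial : ℂ) * (s + k)⁻¹‖ :=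
  summable_of_isBigO_nat (Real.summable_nat_rpow.2 (by linarith))
    (poch_div_factorial_mul_inv_isBigO a s).norm_left

lemma tendsto_poch_div_factorial_mul_inv_mul_natCast {a : ℂ} (ha : a.re < 1) (s : ℂ) :
    Tendsto (fun k : ℕ => poch a k / (k.factorial : ℂ) * (s + k)⁻¹ * k) atTop (𝓝 0) := by
  have hcast : (fun k : ℕ => (k : ℂ)) =O[atTop] fun k : ℕ => (k : ℝ) :=
    IsBigO.of_norm_left (by simpa only [norm_natCast] using isBigO_refl _ _)
  refine ((poch_div_factorial_mul_inv_isBigO a s).mul hcast).trans_tendsto ?_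
  have hpow : Tendsto (fun k : ℕ => (k : ℝ) ^ (-(1 - a.re))) atTop (𝓝 0) :=
    (tendsto_rpow_neg_atTop (by linarith)).comp tendsto_natCast_atTop_atTop
  refine hpow.congr' ?_
  filter_upwards [eventually_ne_atTop 0] with k hk
  rw [← Real.rpow_add_one (Nat.cast_ne_zero.2 hk)]
  ring_nf

end Asymptotics

section BetaSeries

open MeasureTheory Set

lemma hasSum_poch_div_factorial_mul_pow (a : ℂ) {z : ℂ} (hz : ‖z‖ < 1) :
    HasSum (fun k : ℕ => poch a k / (k.factorial : ℂ) * z ^ k) ((1 - z) ^ (-a)) := by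
  have h := (one_div_one_sub_cpow_hasFPowerSeriesOnBall_zero a).hasSum (y := z)
    (by simpa [← ENNReal.ofReal_one, Metric.eball_ofReal] using hz)
  simpa [cpow_neg, poch_div_factorial_eq_choose, mul_comm] using h

lemma integrableOn_Ioc_cpow_sub_one {s : ℂ} (hs : 0 < s.re) :
    IntegrableOn (fun t : ℝ => (t : ℂ) ^ (s - 1)) (Ioc 0 1) := by
  rw [← intervalIntegrable_iff_integrableOn_Ioc_of_le zero_le_one]
  exact intervalIntegral.intervalIntegrable_cpow' (by simpa using hs)

lemma integral_Ioc_cpow_sub_one {s : ℂ} (hs : 0 < s.re) :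
    ∫ t in Ioc (0 : ℝ) 1, (t : ℂ) ^ (s - 1) = s⁻¹ := by
  simpa [betaIntegral, intervalIntegral.integral_of_le zero_le_one]
    using betaIntegral_eval_one_right hs

lemma integral_Ioc_norm_cpow_sub_one {s : ℂ} (hs : 0 < s.re) :
    ∫ t in Ioc (0 : ℝ) 1, ‖(t : ℂ) ^ (s - 1)‖ = s.re⁻¹ := by
  have hnorm : ∀ t ∈ Ioc (0 : ℝ) 1, ‖(t : ℂ) ^ (s - 1)‖ = t ^ (s.re - 1) := fun t ht => by
    rw [norm_cpow_eq_rpow_re_of_pos ht.1, sub_re, one_re]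
  rw [setIntegral_congr_fun measurableSet_Ioc hnorm, ← intervalIntegral.integral_of_le zero_le_one,
    integral_rpow (Or.inl (by linarith)), sub_add_cancel, Real.one_rpow, Real.zero_rpow hs.ne',
    sub_zero, one_div]

lemma hasSum_poch_div_factorial_mul_cpow (a s : ℂ) {t : ℝ} (ht0 : 0 < t) (ht1 : t < 1) :
    HasSum (fun k : ℕ => poch a k / (k.factorial : ℂ) * (t : ℂ) ^ (s + k - 1))
      ((t : ℂ) ^ (s - 1) * (1 - (t : ℂ)) ^ (-a)) := by
  have ht : (t : ℂ) ≠ 0 := ofReal_ne_zero.2 ht0.ne'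
  have hbinom := hasSum_poch_div_factorial_mul_pow a (z := t) (by simpa [abs_of_pos ht0] using ht1)
  refine (hbinom.mul_left ((t : ℂ) ^ (s - 1))).congr_fun fun k => ?_
  rw [add_sub_right_comm, cpow_add _ _ ht, cpow_natCast]
  ring

lemma hasSum_poch_div_factorial_mul_inv_of_re_pos {a s : ℂ} (ha : a.re < 1) (hs : 0 < s.re) :
    HasSum (fun k : ℕ => poch a k / (k.factorial : ℂ) * (s + k)⁻¹) (cBeta (1 - a) s) := by
  have hre (k : ℕ) : 0 < (s + k).re := by
    rw [add_re, natCast_re]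
    positivity
  have hsummable : Summable fun k : ℕ =>
      ∫ t in Ioc (0 : ℝ) 1, ‖poch a k / (k.factorial : ℂ) * (t : ℂ) ^ (s + k - 1)‖ := by
    simp only [norm_mul, integral_const_mul, integral_Ioc_norm_cpow_sub_one (hre _)]
    refine (summable_norm_poch_div_factorial_mul_inv ha (s.re : ℂ)).congr fun k => ?_
    rw [norm_mul, norm_inv, ← ofReal_natCast k, ← ofReal_add, norm_real,
      add_re, ofReal_re, Real.norm_of_nonneg (by positivity)]
  have hexchange := hasSum_integral_of_summable_integral_norm
    (fun k => (integrableOn_Ioc_cpow_sub_one (hre k)).const_mul _) hsummable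
  simp only [integral_const_mul, integral_Ioc_cpow_sub_one (hre _)] at hexchange
  rw [cBeta_comm, cBeta_eq_betaIntegral hs (by simpa using ha), betaIntegral,
    intervalIntegral.integral_of_le zero_le_one]
  convert! hexchange using 1
  refine setIntegral_congr_ae measurableSet_Ioc ?_
  filter_upwards [Measure.ae_ne volume (1 : ℝ)] with t ht1 ht
  rw [(hasSum_poch_div_factorial_mul_cpow a s ht.1 (ht.2.lt_of_ne ht1)).tsum_eq,
    sub_sub_cancel_left]

lemma poch_div_factorial_mul_inv_telescope (a : ℂ) {s : ℂ} (hs : ∀ k : ℕ, s ≠ -(k : ℂ)) (k : ℕ) :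
    s * (poch a k / (k.factorial : ℂ) * (s + k)⁻¹)
        - (1 - a + s) * (poch a k / (k.factorial : ℂ) * (s + 1 + k)⁻¹)
      = poch a (k + 1) / ((k + 1).factorial : ℂ) * (s + (k + 1 : ℕ))⁻¹ * (k + 1 : ℕ)
        - poch a k / (k.factorial : ℂ) * (s + k)⁻¹ * k := by
  have hk := add_natCast_ne_zero hs k
  have hk1 := add_natCast_ne_zero hs (k + 1)
  have hkfac : (k.factorial : ℂ) ≠ 0 := Nat.cast_ne_zero.2 k.factorial_ne_zero
  have hksucc : (k : ℂ) + 1 ≠ 0 := Nat.cast_add_one_ne_zero k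
  rw [poch_succ, Nat.factorial_succ, add_right_comm s 1, add_assoc s]
  push_cast at hk1 ⊢
  field_simp
  ring

lemma hasSum_poch_div_factorial_mul_inv_of_add_one {a s : ℂ} (ha : a.re < 1)
    (hs : ∀ k : ℕ, s ≠ -(k : ℂ))
    (h : HasSum (fun k : ℕ => poch a k / (k.factorial : ℂ) * (s + 1 + k)⁻¹)
      (cBeta (1 - a) (s + 1))) :
    HasSum (fun k : ℕ => poch a k / (k.factorial : ℂ) * (s + k)⁻¹) (cBeta (1 - a) s) := by
  have hs0 : s ≠ 0 := by simpa using hs 0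
  have hsummable := (summable_norm_poch_div_factorial_mul_inv ha s).of_norm
  have hdiff : HasSum (fun k : ℕ => s * (poch a k / (k.factorial : ℂ) * (s + k)⁻¹)
      - (1 - a + s) * (poch a k / (k.factorial : ℂ) * (s + 1 + k)⁻¹)) 0 := by
    rw [((hsummable.mul_left s).sub (h.summable.mul_left (1 - a + s))).hasSum_iff_tendsto_nat]
    refine (tendsto_poch_div_factorial_mul_inv_mul_natCast ha s).congr fun n => ?_
    simp only [poch_div_factorial_mul_inv_telescope a hs]
    rw [sum_range_sub fun k : ℕ => poch a k / (k.factorial : ℂ) * (s + k)⁻¹ * k,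
      Nat.cast_zero, mul_zero, sub_zero]
  have hmul := hdiff.add (h.mul_left (1 - a + s))
  simp only [sub_add_cancel, zero_add] at hmul
  rwa [mul_comm (1 - a + s), cBeta_add_one_right_mul _ hs0, mul_comm _ s,
    hasSum_mul_left_iff hs0] at hmul

theorem hasSum_poch_div_factorial_mul_inv {a s : ℂ} (ha : a.re < 1)
    (hs : ∀ k : ℕ, s ≠ -(k : ℂ)) :
    HasSum (fun k : ℕ => poch a k / (k.factorial : ℂ) * (s + k)⁻¹) (cBeta (1 - a) s) := by
  obtain ⟨N, hN⟩ := exists_nat_gt (-s.re)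
  induction N generalizing s with
  | zero => exact hasSum_poch_div_factorial_mul_inv_of_re_pos ha (by simpa using hN)
  | succ N ih =>
    refine hasSum_poch_div_factorial_mul_inv_of_add_one ha hs (ih ?_ ?_)
    · simpa using add_natCast_ne_neg_natCast hs 1
    · push_cast at hN
      rw [add_re, one_re]
      linarith

end BetaSeries

section PartialFractions

open Polynomial Lagrange

variable {F ι κ : Type*} [Field F]

lemma nodal_disjSum (s : Finset ι) (t : Finset κ) (u : ι → F) (v : κ → F) :
    nodal (s.disjSum t) (Sum.elim u v) = nodal s u * nodal t v := by
  simp only [nodal, prod_disjSum, Sum.elim_inl, Sum.elim_inr]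

variable [DecidableEq ι]

lemma eval_div_eval_nodal {t : Finset ι} {u : ι → F} {q : F[X]} (hu : Set.InjOn u t)
    (hq : q.degree < #t) {x : F} (hx : ∀ i ∈ t, x ≠ u i) :
    q.eval x / (nodal t u).eval x
      = ∑ i ∈ t, nodalWeight t u i * q.eval (u i) * (x - u i)⁻¹ := by
  rw [div_eq_iff (eval_nodal_not_at_node hx)]
  conv_lhs => rw [eq_interpolate hu hq, eval_interpolate_not_at_node _ hx, mul_comm]
  simp only [mul_right_comm]

variable [DecidableEq κ]

lemma nodalWeight_disjSum_inl (s : Finset ι) (t : Finset κ) (u : ι → F) (v : κ → F) (i : ι) :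
    nodalWeight (s.disjSum t) (Sum.elim u v) (.inl i)
      = nodalWeight s u i * ((nodal t v).eval (u i))⁻¹ := by
  have herase : (s.disjSum t).erase (.inl i) = (s.erase i).disjSum t := by
    ext (_ | _) <;> simp
  simp only [nodalWeight, herase, prod_disjSum, Sum.elim_inl, Sum.elim_inr, eval_nodal,
    prod_inv_distrib, mul_inv]

lemma nodalWeight_disjSum_inr (s : Finset ι) (t : Finset κ) (u : ι → F) (v : κ → F) (i : κ) :
    nodalWeight (s.disjSum t) (Sum.elim u v) (.inr i)
      = nodalWeight t v i * ((nodal s u).eval (v i))⁻¹ := by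
  have herase : (s.disjSum t).erase (.inr i) = s.disjSum (t.erase i) := by
    ext (_ | _) <;> simp
  simp only [nodalWeight, herase, prod_disjSum, Sum.elim_inl, Sum.elim_inr, eval_nodal,
    prod_inv_distrib, mul_inv, mul_comm]

lemma hasSum_poch_div_factorial_mul_eval_div_eval_nodal_of_re_lt_one {t : Finset ι} {u : ι → ℂ}
    (hu : Set.InjOn u t) (hnat : ∀ i ∈ t, ∀ k : ℕ, (k : ℂ) ≠ u i) {q : ℂ[X]}
    (hq : q.degree < #t) {a : ℂ} (ha : a.re < 1) :
    HasSum (fun k : ℕ => poch a k / (k.factorial : ℂ) *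
        (q.eval (k : ℂ) / (nodal t u).eval (k : ℂ)))
      (∑ i ∈ t, nodalWeight t u i * q.eval (u i) * cBeta (1 - a) (-u i)) := by
  simp only [eval_div_eval_nodal hu hq fun i hi => hnat i hi _, mul_sum]
  refine hasSum_sum fun i hi => ?_
  have hbeta : HasSum _ (cBeta (1 - a) (-u i)) :=
    hasSum_poch_div_factorial_mul_inv ha fun k h =>
      hnat i hi k (neg_injective h).symm
  refine (hbeta.mul_left (nodalWeight t u i * q.eval (u i))).congr_fun fun k => ?_
  rw [neg_add_eq_sub]
  ring

theorem hasSum_poch_div_factorial_mul_eval_div_eval_nodal {t : Finset ι} {u : ι → ℂ}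
    (hu : Set.InjOn u t) (hnat : ∀ i ∈ t, ∀ k : ℕ, (k : ℂ) ≠ u i) (d : ℕ) {q : ℂ[X]}
    (hq : q.natDegree + d < #t) {a : ℂ} (ha : a.re < d + 1)
    (ha1 : ∀ k : ℕ, 1 - a ≠ -(k : ℂ)) :
    HasSum (fun k : ℕ => poch a k / (k.factorial : ℂ) *
        (q.eval (k : ℂ) / (nodal t u).eval (k : ℂ)))
      (∑ i ∈ t, nodalWeight t u i * q.eval (u i) * cBeta (1 - a) (-u i)) := by
  induction d generalizing q a with
  | zero =>
    exact hasSum_poch_div_factorial_mul_eval_div_eval_nodal_of_re_lt_one hu hnat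
      (degree_le_natDegree.trans_lt (by exact_mod_cast hq)) (by simpa using ha)
  | succ d ih =>
    have ha0 : a - 1 ≠ 0 := by
      rw [← neg_ne_zero, neg_sub]
      simpa using ha1 0
    have hdeg : ((X + C (a - 1)) * q).natDegree + d < #t := by
      have := natDegree_mul_le (p := X + C (a - 1)) (q := q)
      rw [natDegree_X_add_C] at this
      lia
    have hprev := (ih hdeg (a := a - 1) (by rw [sub_re, one_re]; push_cast at ha; linarith)
      fun k h => ha1 (k + 1) (by push_cast; linear_combination h)).mul_left (a - 1)⁻¹
    have hpoch (k : ℕ) : (a - 1) * poch a k = poch (a - 1) k * (a - 1 + k) := by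
      rw [← poch_succ, poch_succ_left, sub_add_cancel]
    have hbeta (s : ℂ) :
        (s + (a - 1)) * cBeta (1 - (a - 1)) (-s) = (a - 1) * cBeta (1 - a) (-s) := by
      have := cBeta_add_one_left_mul (x := 1 - a) (by simpa using ha1 0) (-s)
      rw [show 1 - (a - 1) = 1 - a + 1 by ring]
      linear_combination -this
    simp only [eval_mul, eval_add, eval_X, eval_C] at hprev
    convert! hprev using 1
    · ext k
      rw [eq_inv_mul_iff_mul_eq₀ ha0]
      linear_combination (q.eval (k : ℂ) / (nodal t u).eval (k : ℂ) / k.factorial) * hpoch k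
    · rw [eq_inv_mul_iff_mul_eq₀ ha0, mul_sum]
      refine sum_congr rfl fun i _ => ?_
      linear_combination -(nodalWeight t u i * q.eval (u i)) * hbeta (u i)

end PartialFractions

section PochhammerPoles

open Polynomial Lagrange

/-- `pochPole x 0, …, pochPole x (N - 1)` are the poles of `k ↦ 1 / poch (x + k) N`, which serve as
the nodes of its partial fraction expansion. -/
noncomputable def pochPole (x : ℂ) (j : ℕ) : ℂ := -(x + j)

lemma eval_nodal_pochPole (x y : ℂ) (N : ℕ) :
    (nodal (range N) (pochPole x)).eval y = poch (x + y) N := by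
  rw [eval_nodal, poch]
  exact prod_congr rfl fun j _ => by rw [pochPole]; ring

lemma pochPole_injective (x : ℂ) : Function.Injective (pochPole x) := by
  intro i j h
  simpa [pochPole] using h

lemma natCast_ne_pochPole {x : ℂ} (hx : ∀ k : ℕ, x ≠ -(k : ℂ)) (j k : ℕ) :
    (k : ℂ) ≠ pochPole x j := by
  intro h
  exact add_natCast_ne_neg_natCast hx j k (by rw [h, pochPole, neg_neg])

lemma prod_range_erase_natCast_sub {R : Type*} [CommRing R] (j l : ℕ) :
    ∏ i ∈ (range (j + l + 1)).erase j, ((i : R) - j) = (-1) ^ j * j.factorial * l.factorial := by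
  induction l with
  | zero =>
    have hbelow : ∏ i ∈ range j, ((i : R) - j) = (-1) ^ j * j.factorial := by
      simp only [← neg_sub (j : R), prod_neg, card_range, ← descPochhammer_eval_eq_prod_range,
        descPochhammer_eval_eq_descFactorial, Nat.descFactorial_self]
    rw [add_zero, range_add_one, erase_insert notMem_range_self, hbelow, Nat.factorial_zero,
      Nat.cast_one, mul_one]
  | succ l ih =>
    have hj : j ≠ j + (l + 1) := by lia
    rw [range_add_one, erase_insert_of_ne hj.symm, prod_insert (by simp), ← add_assoc, ih,
      Nat.factorial_succ]
    push_cast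
    ring

lemma nodalWeight_pochPole (x : ℂ) {m j : ℕ} (hj : j ≤ m) :
    nodalWeight (range (m + 1)) (pochPole x) j
      = poch (-(m : ℂ)) j / ((m.factorial : ℂ) * (j.factorial : ℂ)) := by
  obtain ⟨l, rfl⟩ := Nat.exists_eq_add_of_le hj
  have hdiff (i : ℕ) : pochPole x j - pochPole x i = i - j := by
    rw [pochPole, pochPole]
    ring
  have hfac : ((j + l).factorial : ℂ) = l.factorial * (j + l).descFactorial j := by
    exact_mod_cast (by simpa using (Nat.factorial_mul_descFactorial hj).symm)
  have hjfac : (j.factorial : ℂ) ≠ 0 := Nat.cast_ne_zero.2 j.factorial_ne_zero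
  have hlfac : (l.factorial : ℂ) ≠ 0 := Nat.cast_ne_zero.2 l.factorial_ne_zero
  have hdesc : ((j + l).descFactorial j : ℂ) ≠ 0 :=
    Nat.cast_ne_zero.2 (Nat.descFactorial_eq_zero_iff_lt.not.2 (by lia))
  simp only [nodalWeight, hdiff, prod_inv_distrib]
  rw [prod_range_erase_natCast_sub, poch_neg_natCast, hfac]
  field_simp
  rw [← pow_mul, mul_comm, pow_mul, neg_one_sq, one_pow]

variable {m n : ℕ} {b c : ℂ}

lemma injOn_sumElim_pochPole (hbc : ∀ j ≤ m, ∀ i ≤ n, b + j ≠ c + i) :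
    Set.InjOn (Sum.elim (pochPole b) (pochPole c)) ((range (m + 1)).disjSum (range (n + 1))) := by
  have hcross : ∀ j ∈ range (m + 1), ∀ i ∈ range (n + 1), pochPole b j ≠ pochPole c i :=
    fun j hj i hi h => hbc j (mem_range_succ_iff.1 hj) i (mem_range_succ_iff.1 hi) (neg_injective h)
  rintro (j | j) hj (i | i) hi h <;>
    simp only [mem_coe, inl_mem_disjSum, inr_mem_disjSum, Sum.elim_inl, Sum.elim_inr] at hj hi h
  · rw [pochPole_injective b h]
  · exact absurd h (hcross j hj i hi)
  · exact absurd h.symm (hcross i hi j hj)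
  · rw [pochPole_injective c h]

lemma hypergeometric_term_eq_div_eval_nodal (m n : ℕ) (a : ℂ) (hb : ∀ k : ℕ, b ≠ -(k : ℂ))
    (hc : ∀ k : ℕ, c ≠ -(k : ℂ)) (k : ℕ) :
    poch a k * poch b k * poch c k /
        (poch (b + 1 + m) k * poch (c + 1 + n) k * (k.factorial : ℂ))
      = poch b (m + 1) * poch c (n + 1) * (poch a k / (k.factorial : ℂ) *
        (1 / (nodal ((range (m + 1)).disjSum (range (n + 1)))
          (Sum.elim (pochPole b) (pochPole c))).eval (k : ℂ))) := by
  rw [nodal_disjSum, eval_mul, eval_nodal_pochPole, eval_nodal_pochPole]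
  calc _ = poch a k / k.factorial * (poch b k / poch (b + 1 + m) k)
        * (poch c k / poch (c + 1 + n) k) := by ring
    _ = _ := by
      rw [poch_div_poch_add_one_add hb, poch_div_poch_add_one_add hc]
      ring

lemma inv_poch_sub_natCast (hbc : ∀ j ≤ m, ∀ i ≤ n, b + j ≠ c + i) {j : ℕ} (hj : j ≤ m) :
    (poch (c - b - j) (n + 1))⁻¹
      = poch (b - c - n) j / (poch (c - b) (n + 1) * poch (1 + b - c) j) := by
  have hshifted : poch (c - b - j) (n + 1) ≠ 0 := poch_ne_zero_iff.2 fun i hi h =>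
    hbc j hj i (Nat.le_of_lt_succ hi) (by linear_combination -h)
  have hbase : poch (c - b) (n + 1) ≠ 0 := poch_ne_zero_iff.2 fun i hi h =>
    hbc 0 m.zero_le i (Nat.le_of_lt_succ hi) (by push_cast; linear_combination -h)
  have hdenom : poch (1 + b - c) j ≠ 0 := poch_ne_zero_iff.2 fun i hi h =>
    hbc (i + 1) (by lia) 0 n.zero_le (by push_cast; linear_combination h)
  have hreflect := poch_sub_natCast_mul_poch (c - b) (n + 1) j
  push_cast at hreflect
  rw [show 1 - (c - b) - ((n : ℂ) + 1) = b - c - n by ring,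
    show 1 - (c - b) = 1 + b - c by ring] at hreflect
  rw [inv_eq_one_div, div_eq_div_iff hshifted (mul_ne_zero hbase hdenom)]
  linear_combination -hreflect

lemma sum_nodalWeight_pochPole_mul_cBeta (a : ℂ) (hb : ∀ k : ℕ, b ≠ -(k : ℂ))
    (hbc : ∀ j ≤ m, ∀ i ≤ n, b + j ≠ c + i) (h2 : ∀ k : ℕ, 1 + b - a ≠ -(k : ℂ)) :
    ∑ j ∈ range (m + 1), nodalWeight (range (m + 1)) (pochPole b) j *
        ((nodal (range (n + 1)) (pochPole c)).eval (pochPole b j))⁻¹ *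
        cBeta (1 - a) (-pochPole b j)
      = cBeta (1 - a) b / (poch (c - b) (n + 1) * (m.factorial : ℂ)) *
        ∑ k ∈ range (m + 1), poch (-(m : ℂ)) k * poch b k * poch (b - c - n) k /
          (poch (1 + b - a) k * poch (1 + b - c) k * (k.factorial : ℂ)) := by
  rw [mul_sum]
  refine sum_congr rfl fun j hj => ?_
  have hjm : j ≤ m := mem_range_succ_iff.1 hj
  have hbeta : cBeta (1 - a) (b + j) = cBeta (1 - a) b * poch b j / poch (1 + b - a) j := by
    rw [eq_div_iff (poch_ne_zero h2 j), ← cBeta_add_natCast_mul_poch _ hb, add_sub_right_comm]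
  rw [nodalWeight_pochPole b hjm, eval_nodal_pochPole, pochPole, neg_neg, hbeta,
    show c + -(b + j) = c - b - j by ring, inv_poch_sub_natCast hbc hjm]
  ring

end PochhammerPoles

theorem main_summation_ZY_general (m n : ℕ) (a b c : ℂ) (ha : a.re < m + n + 2)
    (hb : ∀ k : ℕ, b ≠ -(k : ℂ)) (hc : ∀ k : ℕ, c ≠ -(k : ℂ))
    (hbc : ∀ j ≤ m, ∀ i ≤ n, b + j ≠ c + i)
    (h1 : ∀ k : ℕ, 1 - a ≠ -(k : ℂ)) (h2 : ∀ k : ℕ, 1 + b - a ≠ -(k : ℂ))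
    (h3 : ∀ k : ℕ, 1 + c - a ≠ -(k : ℂ)) :
    HasSum (fun k : ℕ =>
        poch a k * poch b k * poch c k /
          (poch (b + 1 + m) k * poch (c + 1 + n) k * (Nat.factorial k : ℂ)))
      (poch b (m + 1) * poch c (n + 1) *
        (cBeta (1 - a) b / (poch (c - b) (n + 1) * (Nat.factorial m : ℂ)) *
          ∑ k ∈ Finset.range (m + 1),
            poch (-(m : ℂ)) k * poch b k * poch (b - c - n) k /
              (poch (1 + b - a) k * poch (1 + b - c) k * (Nat.factorial k : ℂ))
        + cBeta (1 - a) c / (poch (b - c) (m + 1) * (Nat.factorial n : ℂ)) *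
          ∑ k ∈ Finset.range (n + 1),
            poch (-(n : ℂ)) k * poch c k * poch (c - b - m) k /
              (poch (1 + c - a) k * poch (1 + c - b) k * (Nat.factorial k : ℂ)))) := by
  have hnat : ∀ p ∈ (range (m + 1)).disjSum (range (n + 1)), ∀ k : ℕ,
      (k : ℂ) ≠ Sum.elim (pochPole b) (pochPole c) p := by
    rintro (j | i) - k
    exacts [natCast_ne_pochPole hb j k, natCast_ne_pochPole hc i k]
  have hdeg : (1 : Polynomial ℂ).natDegree + (m + n + 1)
      < #((range (m + 1)).disjSum (range (n + 1))) := by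
    rw [Polynomial.natDegree_one, card_disjSum, card_range, card_range]
    lia
  have hsum := hasSum_poch_div_factorial_mul_eval_div_eval_nodal (injOn_sumElim_pochPole hbc) hnat
    (m + n + 1) hdeg (by push_cast; linarith) h1
  simp only [sum_disjSum, nodalWeight_disjSum_inl, nodalWeight_disjSum_inr, Sum.elim_inl,
    Sum.elim_inr, Polynomial.eval_one, mul_one] at hsum
  rw [sum_nodalWeight_pochPole_mul_cBeta a hb hbc h2,
    sum_nodalWeight_pochPole_mul_cBeta a hc (fun i hi j hj => (hbc j hj i hi).symm) h3] at hsum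
  exact (hsum.mul_left _).congr_fun fun k =>
    hypergeometric_term_eq_div_eval_nodal m n a hb hc k

theorem main_summation_ZY (m n : ℕ) (a b c : ℂ) (ha : a.re < 2)
    (hb : ∀ k : ℕ, b ≠ -(k : ℂ)) (hc : ∀ k : ℕ, c ≠ -(k : ℂ))
    (hcb : ∀ k : ℤ, c - b ≠ k)
    (h1 : ∀ k : ℕ, 1 - a ≠ -(k : ℂ)) (h2 : ∀ k : ℕ, 1 + b - a ≠ -(k : ℂ))
    (h3 : ∀ k : ℕ, 1 + c - a ≠ -(k : ℂ)) :
    HasSum (fun k : ℕ =>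
        poch a k * poch b k * poch c k /
          (poch (b + 1 + m) k * poch (c + 1 + n) k * (Nat.factorial k : ℂ)))
      (poch b (m + 1) * poch c (n + 1) *
        (cBeta (1 - a) b / (poch (c - b) (n + 1) * (Nat.factorial m : ℂ)) *
          ∑ k ∈ Finset.range (m + 1),
            poch (-(m : ℂ)) k * poch b k * poch (b - c - n) k /
              (poch (1 + b - a) k * poch (1 + b - c) k * (Nat.factorial k : ℂ))
        + cBeta (1 - a) c / (poch (b - c) (m + 1) * (Nat.factorial n : ℂ)) *
          ∑ k ∈ Finset.range (n + 1),
            poch (-(n : ℂ)) k * poch c k * poch (c - b - m) k /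
              (poch (1 + c - a) k * poch (1 + c - b) k * (Nat.factorial k : ℂ)))) := by
  have ha' : a.re < m + n + 2 := ha.trans_le (le_add_of_nonneg_left (by positivity))
  refine main_summation_ZY_general m n a b c ha' hb hc (fun j _ i _ h => hcb (j - i) ?_) h1 h2 h3
  push_cast
  linear_combination -h
end
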